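/- arXiv:2007.01175 — 2 statements merged into one kernel-verified Lean document; each statement's English description precedes it below -/
import Mathlib

section
/- For any finitely supported signed measures ω, σ on a space X (e.g. finite formal ℝ-linear combinations of Dirac measures) and any n ∈ ℕ, the falling factorial measures satisfy the binomial identity (ω+σ)_n = Σ_{k=0}^{n} C(n,k) · Sym((ω)_k ⊗ (σ)_{n−k}), where Sym denotes symmetrization of the tensor product measure on X^n. -/
open Finset

section Defs

variable {X : Type*} [Fintype X] [DecidableEq X]

/-- The falling factorial measure `(ω)_n` on `X^n`, given by the density
`(ω)_n(y₁,…,y_n) = ω(y₁)(ω(y₂)−δ_{y₁}(y₂))⋯(ω(y_n)−δ_{y₁}(y_n)−⋯−δ_{y_{n−1}}(y_n))`. -/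
noncomputable def ff (ω : X → ℝ) : (n : ℕ) → (Fin n → X) → ℝ
  | 0 => fun _ => 1
  | n + 1 => fun y =>
      ff ω n (fun i => y i.castSucc) *
        (ω (y (Fin.last n)) - ∑ i : Fin n, if y i.castSucc = y (Fin.last n) then (1 : ℝ) else 0)

/-- Dirac measure at `x`. -/
noncomputable def diracMeas (x : X) : X → ℝ := fun a => if a = x then 1 else 0

/-- The measure `δ_{x₁}+⋯+δ_{x_k}` of a multiset `[x₁,…,x_k]`. -/
noncomputable def msMeas {k : ℕ} (x : Fin k → X) : X → ℝ :=
  fun a => ((Finset.univ.filter (fun i => x i = a)).card : ℝ)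

/-- Integration `⟨μ, f⟩` of a function against a measure on `X^n`. -/
noncomputable def pairing (n : ℕ) (μ f : (Fin n → X) → ℝ) : ℝ :=
  ∑ y : Fin n → X, μ y * f y

/-- Symmetrization of a function/measure on `X^n`. -/
noncomputable def symmFun (n : ℕ) (μ : (Fin n → X) → ℝ) : (Fin n → X) → ℝ :=
  fun y => (∑ π : Equiv.Perm (Fin n), μ (y ∘ π)) / n.factorial

/-- Tensor product of measures/functions on `X^k` and `X^m`. -/
noncomputable def tensFun {k m : ℕ} (μ : (Fin k → X) → ℝ) (ν : (Fin m → X) → ℝ) :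
    (Fin (k + m) → X) → ℝ :=
  fun y => μ (fun i => y (Fin.castAdd m i)) * ν (fun j => y (Fin.natAdd k j))

/-- Re-indexing along an equality of dimensions. -/
def castFun {m n : ℕ} (h : m = n) (μ : (Fin m → X) → ℝ) : (Fin n → X) → ℝ :=
  fun y => μ (fun i => y (Fin.cast h i))

/-- The product measure `ω^{⊗n}` (and likewise the tensor power `ξ^{⊗n}` of a function). -/
noncomputable def prodMeas (ω : X → ℝ) (n : ℕ) : (Fin n → X) → ℝ :=
  fun y => ∏ i, ω (y i)

/-- A function on `X^n` is symmetric. -/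
def IsSymmFun {n : ℕ} (f : (Fin n → X) → ℝ) : Prop :=
  ∀ (π : Equiv.Perm (Fin n)) (y : Fin n → X), f (y ∘ π) = f y

end Defs

/-- The set of surjections `Fin n → Fin k`; these correspond to set partitions of
`{1,…,n}` into `k` nonempty blocks together with an ordering of the blocks. -/
noncomputable def surjs (n k : ℕ) : Finset (Fin n → Fin k) :=
  Finset.univ.filter (fun g => Function.Surjective g)

/-- Cardinality of the fiber `g⁻¹(i)` (the size of block `i`). -/
def fiberCard {n k : ℕ} (g : Fin n → Fin k) (i : Fin k) : ℕ :=
  (Finset.univ.filter (fun j => g j = i)).card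

section Ops

variable {X : Type*} [Fintype X] [DecidableEq X]

/-- Stirling operator of the second kind `S(n,k) = Σ_{λ ∈ UP(n,k)} D_λ`:
summing the substitute-and-symmetrize operators over unordered partitions of `{1,…,n}`
into `k` nonempty blocks is the same as summing `f(y ∘ g)` over the surjections
`g : Fin n → Fin k` and dividing by `k!`. -/
noncomputable def Sop (n k : ℕ) (f : (Fin n → X) → ℝ) : (Fin k → X) → ℝ :=
  fun y => (∑ g ∈ surjs n k, f (y ∘ g)) / k.factorial

/-- Unsigned Stirling operator of the first kind
`c(n,k) = Σ_{λ={λ₁,…,λ_k} ∈ UP(n,k)} (|λ₁|−1)!⋯(|λ_k|−1)! · D_λ`. -/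
noncomputable def cop (n k : ℕ) (f : (Fin n → X) → ℝ) : (Fin k → X) → ℝ :=
  fun y => (∑ g ∈ surjs n k, (∏ i : Fin k, ((fiberCard g i - 1).factorial : ℝ)) * f (y ∘ g)) /
    k.factorial

/-- Stirling operator of the first kind `s(n,k) = (−1)^{n−k} c(n,k)`. -/
noncomputable def sop (n k : ℕ) (f : (Fin n → X) → ℝ) : (Fin k → X) → ℝ :=
  fun y => (-1 : ℝ) ^ (n - k) * cop n k f y

/-- Lah operator `L(n,k) = Σ_{λ={λ₁,…,λ_k} ∈ UP(n,k)} |λ₁|!⋯|λ_k|! · D_λ`. -/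
noncomputable def Lop (n k : ℕ) (f : (Fin n → X) → ℝ) : (Fin k → X) → ℝ :=
  fun y => (∑ g ∈ surjs n k, (∏ i : Fin k, ((fiberCard g i).factorial : ℝ)) * f (y ∘ g)) /
    k.factorial

end Ops

/-- Symmetric form of the falling factorial density along a finite index set. -/
noncomputable def ffSet {X ι : Type*} [Fintype X] [DecidableEq X] (ω : X → ℝ) (y : ι → X)
    (S : Finset ι) : ℝ :=
  ∏ x : X, ∏ j ∈ Finset.range (S.filter (fun i => y i = x)).card, (ω x - (j : ℝ))

theorem ffSet_insert {X ι : Type*} [Fintype X] [DecidableEq X] [DecidableEq ι] (ω : X → ℝ)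
    (y : ι → X) (S : Finset ι) (a : ι) (ha : a ∉ S) :
    ffSet ω y (insert a S) =
      ffSet ω y S * (ω (y a) - ((S.filter (fun i => y i = y a)).card : ℝ)) := by
  unfold ffSet
  rw [← Finset.mul_prod_erase univ _ (Finset.mem_univ (y a)),
    ← Finset.mul_prod_erase univ (fun x => ∏ j ∈ Finset.range (S.filter (fun i => y i = x)).card,
      (ω x - (j : ℝ))) (Finset.mem_univ (y a))]
  have h1 : ((insert a S).filter (fun i => y i = y a)).card
      = (S.filter (fun i => y i = y a)).card + 1 := by
    rw [Finset.filter_insert, if_pos rfl, Finset.card_insert_of_notMem (by simp [ha])]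
  have h2 : ∀ x ∈ univ.erase (y a),
      ∏ j ∈ Finset.range ((insert a S).filter (fun i => y i = x)).card, (ω x - (j : ℝ))
      = ∏ j ∈ Finset.range (S.filter (fun i => y i = x)).card, (ω x - (j : ℝ)) := by
    intro x hx
    rw [Finset.filter_insert, if_neg (Finset.ne_of_mem_erase hx).symm]
  rw [Finset.prod_congr rfl h2, h1, Finset.prod_range_succ]
  ring

theorem ffSet_add {X ι : Type*} [Fintype X] [DecidableEq X] [DecidableEq ι] (ω σ : X → ℝ)
    (y : ι → X) (T : Finset ι) :
    ffSet (ω + σ) y T = ∑ S ∈ T.powerset, ffSet ω y S * ffSet σ y (T \ S) := by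
  induction T using Finset.induction_on with
  | empty => simp [ffSet]
  | insert a T ha ih =>
    rw [ffSet_insert _ _ _ _ ha, ih, Finset.sum_powerset_insert ha, ← Finset.sum_add_distrib,
      Finset.sum_mul]
    refine Finset.sum_congr rfl fun S hS => ?_
    have hST := Finset.mem_powerset.mp hS
    have haS : a ∉ S := fun h => ha (hST h)
    have e1 : insert a T \ S = insert a (T \ S) := Finset.insert_sdiff_of_notMem _ haS
    have e2 : insert a T \ insert a S = T \ S := by
      ext i; simp only [Finset.mem_sdiff, Finset.mem_insert]
      constructor
      · rintro ⟨h1 | h1, h2⟩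
        · exact absurd (Or.inl h1) h2
        · exact ⟨h1, fun h => h2 (Or.inr h)⟩
      · rintro ⟨h1, h2⟩
        refine ⟨Or.inr h1, ?_⟩
        rintro (h | h)
        · exact ha (h ▸ h1)
        · exact h2 h
    rw [e1, e2, ffSet_insert _ _ _ _ haS, ffSet_insert _ _ _ _ (by simp [ha])]
    have hc : ((T.filter (fun i => y i = y a)).card : ℝ)
        = ((S.filter (fun i => y i = y a)).card : ℝ)
          + (((T \ S).filter (fun i => y i = y a)).card : ℝ) := by
      rw [← Nat.cast_add, ← Finset.card_union_of_disjoint, ← Finset.filter_union,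
        Finset.union_sdiff_of_subset hST]
      exact Finset.disjoint_filter_filter Finset.disjoint_sdiff
    rw [hc, Pi.add_apply]
    ring

theorem ff_eq_ffSet {X ι : Type*} [Fintype X] [DecidableEq X] [DecidableEq ι] (ω : X → ℝ)
    (y : ι → X) (n : ℕ) (e : Fin n → ι) (he : Function.Injective e) :
    ff ω n (fun i => y (e i)) = ffSet ω y (univ.image e) := by
  induction n with
  | zero => simp [ff, ffSet]
  | succ n ih =>
    have hi : Function.Injective (fun i : Fin n => e i.castSucc) :=
      he.comp (Fin.castSucc_injective n)
    have h1 : univ.image e = insert (e (Fin.last n)) (univ.image (fun i : Fin n => e i.castSucc)) := by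
      ext j
      simp [Fin.exists_fin_succ', eq_comm, or_comm]
    have hn : e (Fin.last n) ∉ univ.image (fun i : Fin n => e i.castSucc) := by
      simp only [Finset.mem_image, Finset.mem_univ, true_and, not_exists]
      intro i h
      exact (Fin.castSucc_lt_last i).ne (he h)
    rw [h1, ffSet_insert _ _ _ _ hn, ← ih _ hi]
    simp only [ff]
    congr 2
    rw [Finset.filter_image, Finset.card_image_of_injective _ hi]
    simp

theorem sum_perm_image {n : ℕ} (f : Finset (Fin n) → ℝ) (A : Finset (Fin n)) :
    (n.choose A.card : ℝ) * ((∑ π : Equiv.Perm (Fin n), f (A.image π)) / n.factorial)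
      = ∑ S ∈ powersetCard A.card univ, f S := by
  have hmaps : ∀ π ∈ (univ : Finset (Equiv.Perm (Fin n))),
      A.image π ∈ powersetCard A.card (univ : Finset (Fin n)) := by
    intro π _
    simp [Finset.mem_powersetCard, Finset.card_image_of_injective _ π.injective]
  set N : ℕ := (univ.filter (fun π : Equiv.Perm (Fin n) => A.image π = A)).card with hN
  have hfib : ∀ S ∈ powersetCard A.card (univ : Finset (Fin n)),
      (univ.filter (fun π : Equiv.Perm (Fin n) => A.image π = S)).card = N := by
    intro S hS
    have hc : A.card = S.card := (Finset.mem_powersetCard.mp hS).2.symm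
    obtain ⟨τ, hτ⟩ : ∃ τ : Equiv.Perm (Fin n), A.image τ = S := by
      let e := Finset.equivOfCardEq hc
      refine ⟨e.extendSubtype, ?_⟩
      apply Finset.eq_of_subset_of_card_le
      · intro j hj
        obtain ⟨i, hi, rfl⟩ := Finset.mem_image.mp hj
        exact e.extendSubtype_mem i hi
      · rw [Finset.card_image_of_injective _ (Equiv.injective _), hc]
    symm
    refine Finset.card_bij (fun π _ => τ * π) ?_ ?_ ?_
    · intro π hπ
      simp only [Finset.mem_filter, Finset.mem_univ, true_and] at hπ ⊢
      rw [Equiv.Perm.coe_mul, ← Finset.image_image, hπ, hτ]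
    · intro a _ b _ h
      exact mul_left_cancel h
    · intro π hπ
      simp only [Finset.mem_filter, Finset.mem_univ, true_and] at hπ
      refine ⟨τ⁻¹ * π, ?_, by simp⟩
      simp only [Finset.mem_filter, Finset.mem_univ, true_and]
      rw [Equiv.Perm.coe_mul, ← Finset.image_image, hπ, ← hτ, Finset.image_image,
        ← Equiv.Perm.coe_mul]
      simp
  have key : ∀ g : Finset (Fin n) → ℝ, ∑ π : Equiv.Perm (Fin n), g (A.image π)
      = N * ∑ S ∈ powersetCard A.card univ, g S := by
    intro g
    rw [← Finset.sum_fiberwise_of_maps_to hmaps, Finset.mul_sum]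
    refine Finset.sum_congr rfl fun S hS => ?_
    rw [← hfib S hS, ← nsmul_eq_mul]
    apply Finset.sum_eq_card_nsmul
    intro π hπ
    rw [(Finset.mem_filter.mp hπ).2]
  have h1 := key (fun _ => 1)
  simp only [Finset.sum_const, Finset.card_univ, Fintype.card_perm, Fintype.card_fin,
    Finset.card_powersetCard, nsmul_eq_mul, mul_one] at h1
  have hne : (n.factorial : ℝ) ≠ 0 := by exact_mod_cast n.factorial_ne_zero
  rw [key f, ← mul_div_assoc, div_eq_iff hne, h1]
  ring

/-- Binomial identity for falling factorial measures:
`(ω+σ)_n = Σ_{k=0}^{n} C(n,k) · Sym((ω)_k ⊗ (σ)_{n−k})`. -/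
theorem fallingFactorial_binomial
    {X : Type*} [Fintype X] [DecidableEq X] (ω σ : X → ℝ) (n : ℕ) (y : Fin n → X) :
    ff (ω + σ) n y
      = ∑ k ∈ (Finset.range (n + 1)).attach,
          (n.choose k.1 : ℝ) *
            symmFun n (castFun (by have := Finset.mem_range.mp k.2; omega)
              (tensFun (ff ω k.1) (ff σ (n - k.1)))) y := by
  have hL : ff (ω + σ) n y = ffSet (ω + σ) y univ := by
    have := ff_eq_ffSet (ω + σ) y n id Function.injective_id
    simpa using this
  rw [hL, ffSet_add, Finset.sum_powerset, Finset.card_univ, Fintype.card_fin,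
    ← Finset.sum_attach]
  refine Finset.sum_congr rfl fun k _ => ?_
  obtain ⟨k, hk⟩ := k
  have hkn : k ≤ n := by have := Finset.mem_range.mp hk; omega
  have hadd : k + (n - k) = n := by omega
  let e1 : Fin k → Fin n := fun i => Fin.cast hadd (Fin.castAdd (n - k) i)
  let e2 : Fin (n - k) → Fin n := fun i => Fin.cast hadd (Fin.natAdd k i)
  have he1 : Function.Injective e1 := fun a b h => by
    have := congrArg Fin.val h
    simp [e1] at this
    exact Fin.ext this
  have he2 : Function.Injective e2 := fun a b h => by
    have := congrArg Fin.val h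
    simp [e2] at this
    exact Fin.ext this
  have hcompl : univ.image e2 = univ \ univ.image e1 := by
    ext j
    simp only [Finset.mem_image, Finset.mem_univ, true_and, Finset.mem_sdiff, not_exists]
    constructor
    · rintro ⟨b, rfl⟩ a h
      have := congrArg Fin.val h
      simp [e1, e2] at this
      omega
    · intro h
      have hj : k ≤ j.val := by
        by_contra hlt
        exact h ⟨j.val, by omega⟩ (Fin.ext rfl)
      refine ⟨⟨j.val - k, by omega⟩, Fin.ext ?_⟩
      simp [e2]
      omega
  have hcard : (univ.image e1).card = k := by
    rw [Finset.card_image_of_injective _ he1]; simp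
  have hs := sum_perm_image (fun S => ffSet ω y S * ffSet σ y (univ \ S)) (univ.image e1)
  rw [hcard] at hs
  rw [← hs]
  simp only [symmFun]
  congr 2
  refine Finset.sum_congr rfl fun π _ => ?_
  have h1 := ff_eq_ffSet ω y k (fun i => π (e1 i)) (π.injective.comp he1)
  have h2 := ff_eq_ffSet σ y (n - k) (fun i => π (e2 i)) (π.injective.comp he2)
  have i1 : univ.image (fun i => π (e1 i)) = (univ.image e1).image π := by
    rw [Finset.image_image]; rfl
  have i2 : univ.image (fun i => π (e2 i)) = univ \ (univ.image e1).image π := by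
    have : univ.image (fun i => π (e2 i)) = (univ.image e2).image π := by
      rw [Finset.image_image]; rfl
    rw [this, hcompl, Finset.image_sdiff _ _ π.injective, Finset.image_univ_equiv]
  rw [i1] at h1
  rw [i2] at h2
  rw [← h1, ← h2]
  rfl
end

section
/- If the Stirling operators s(n,k) := (−1)^{n−k} c(n,k) and S(n,k) are defined on symmetric functions on X^n as above (with s(n,k)=S(n,k)=0 for k>n and both equal to the identity for k=n), then for all i, n ≥ 1 the biorthogonality identities hold: Σ_{k=1}^{n} s(k,i) ∘ S(n,k) = δ_{ni}·Id and Σ_{k=1}^{n} S(k,i) ∘ s(n,k) = δ_{ni}·Id as operators from symmetric functions on X^n to symmetric functions on X^i. -/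
open Finset

lemma surjs_empty_of_lt {n k : ℕ} (h : n < k) : surjs n k = ∅ := by
  ext g
  simp only [surjs, Finset.mem_filter, Finset.mem_univ, true_and, Finset.notMem_empty, iff_false]
  intro hg
  have := Fintype.card_le_of_surjective g hg
  simp at this
  omega

lemma surjs_zero_empty {n : ℕ} (h : 1 ≤ n) : surjs n 0 = ∅ := by
  ext g
  exact (g ⟨0, h⟩).elim0

lemma mem_surjs {n k : ℕ} {g : Fin n → Fin k} : g ∈ surjs n k ↔ Function.Surjective g := by
  simp [surjs]

lemma fiberCard_eq_sum {n k : ℕ} (g : Fin n → Fin k) (b : Fin k) :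
    fiberCard g b = ∑ a, if g a = b then 1 else 0 := by
  simp [fiberCard]

lemma fiberCard_snoc {n k : ℕ} (g : Fin n → Fin k) (b c : Fin k) :
    fiberCard (Fin.snoc g b : Fin (n+1) → Fin k) c = fiberCard g c + if b = c then 1 else 0 := by
  rw [fiberCard_eq_sum, fiberCard_eq_sum, Fin.sum_univ_castSucc]
  simp

lemma fiberCard_insertNth {n k : ℕ} (a : Fin (n+1)) (g : Fin n → Fin k) (b c : Fin k) :
    fiberCard (a.insertNth b g : Fin (n+1) → Fin k) c
      = fiberCard g c + if b = c then 1 else 0 := by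
  rw [fiberCard_eq_sum, fiberCard_eq_sum, Fin.sum_univ_succAbove _ a]
  simp [add_comm]

lemma fiberCard_pos {n k : ℕ} (g : Fin n → Fin k) (b : Fin k) :
    0 < fiberCard g b ↔ ∃ a, g a = b := by
  simp [fiberCard, Finset.card_pos, Finset.filter_nonempty_iff]

/-- product of `(|block|-1)!` -/
noncomputable def wt {n k : ℕ} (g : Fin n → Fin k) : ℝ :=
  ∏ b : Fin k, ((fiberCard g b - 1).factorial : ℝ)

lemma wt_aux {k : ℕ} (u v : Fin k → ℕ) (c : Fin k)
    (h : ∀ b, u b = v b + if c = b then 1 else 0) :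
    ∏ b : Fin k, ((u b - 1).factorial : ℝ)
      = (if v c = 0 then 1 else (v c : ℝ)) * ∏ b : Fin k, ((v b - 1).factorial : ℝ) := by
  rw [← Finset.mul_prod_erase _ _ (Finset.mem_univ c),
    ← Finset.mul_prod_erase Finset.univ (fun b => ((v b - 1).factorial : ℝ)) (Finset.mem_univ c),
    ← mul_assoc]
  congr 1
  · rw [h c]
    simp only [if_true, Nat.add_sub_cancel]
    rcases Nat.eq_zero_or_pos (v c) with h0 | h0
    · simp [h0]
    · rw [if_neg h0.ne', ← Nat.mul_factorial_pred h0.ne']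
      push_cast; rfl
  · apply Finset.prod_congr rfl
    intro b hb
    rw [h b, if_neg (Finset.ne_of_mem_erase hb).symm, add_zero]

lemma wt_snoc {n k : ℕ} (g : Fin n → Fin k) (hg : Function.Surjective g) (b : Fin k) :
    wt (Fin.snoc g b : Fin (n+1) → Fin k) = fiberCard g b * wt g := by
  have := wt_aux _ _ b (fun c => fiberCard_snoc g b c)
  rw [if_neg ((fiberCard_pos g b).2 (hg b)).ne'] at this
  exact this

lemma wt_insertNth {n k : ℕ} (a : Fin (n+1)) (g : Fin n → Fin k) (b : Fin k) :
    wt (a.insertNth b g : Fin (n+1) → Fin k)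
      = (if fiberCard g b = 0 then 1 else (fiberCard g b : ℝ)) * wt g :=
  wt_aux _ _ b (fun c => fiberCard_insertNth a g b c)

lemma wt_succAbove {n k : ℕ} (g : Fin n → Fin k) (b : Fin (k+1)) :
    wt (Fin.snoc (b.succAbove ∘ g) b : Fin (n+1) → Fin (k+1)) = wt g := by
  unfold wt
  rw [Fin.prod_univ_succAbove _ b]
  have h1 : fiberCard (Fin.snoc (b.succAbove ∘ g) b : Fin (n+1) → Fin (k+1)) b = 1 := by
    rw [fiberCard_snoc, fiberCard_eq_sum]
    simp [Fin.succAbove_ne]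
  have h2 : ∀ c, fiberCard (Fin.snoc (b.succAbove ∘ g) b : Fin (n+1) → Fin (k+1)) (b.succAbove c)
      = fiberCard g c := by
    intro c
    rw [fiberCard_snoc, fiberCard_eq_sum, fiberCard_eq_sum]
    simp [Fin.ne_succAbove]
  simp [h1, h2]

lemma sum_surjs_succ {n k : ℕ} (Φ : (Fin (n+1) → Fin (k+1)) → ℝ) :
    ∑ g ∈ surjs (n+1) (k+1), Φ g
      = (∑ g ∈ surjs n (k+1), ∑ b, Φ (Fin.snoc g b))
        + ∑ b : Fin (k+1), ∑ g ∈ surjs n k, Φ (Fin.snoc (b.succAbove ∘ g) b) := by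
  have e1 : ∑ g ∈ surjs (n+1) (k+1), Φ g
      = ∑ b : Fin (k+1), ∑ g : Fin n → Fin (k+1),
        if Function.Surjective (Fin.snoc g b : Fin (n+1) → Fin (k+1)) then Φ (Fin.snoc g b) else 0 := by
    rw [surjs, Finset.sum_filter, ← (Fin.snocEquiv (fun _ => Fin (k+1))).sum_comp,
      Fintype.sum_prod_type]
    rfl
  have e2 : ∀ b : Fin (k+1), (∑ g : Fin n → Fin (k+1),
        if Function.Surjective (Fin.snoc g b : Fin (n+1) → Fin (k+1)) then Φ (Fin.snoc g b) else 0)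
      = (∑ g ∈ surjs n (k+1), Φ (Fin.snoc g b))
        + ∑ g ∈ surjs n k, Φ (Fin.snoc (b.succAbove ∘ g) b) := by
    intro b
    have hs : ∀ g : Fin n → Fin (k+1),
        Function.Surjective (Fin.snoc g b : Fin (n+1) → Fin (k+1)) ↔
          ∀ c, c ≠ b → ∃ a, g a = c := by
      intro g
      constructor
      · intro h c hc
        obtain ⟨a, ha⟩ := h c
        induction a using Fin.lastCases with
        | last => simp at ha; exact absurd ha.symm hc
        | cast a => exact ⟨a, by simpa using ha⟩
      · intro h c
        by_cases hc : c = b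
        · exact ⟨Fin.last n, by simp [hc]⟩
        · obtain ⟨a, ha⟩ := h c hc
          exact ⟨a.castSucc, by simpa using ha⟩
    have hinj : Function.Injective (fun g : Fin n → Fin k => b.succAbove ∘ g) :=
      Fin.succAbove_right_injective.comp_left
    rw [← Finset.sum_filter, ← Finset.sum_image (s := surjs n k)
      (g := fun g : Fin n → Fin k => b.succAbove ∘ g)
      (f := fun g => Φ (Fin.snoc g b)) (fun x _ y _ h => hinj h), ← Finset.sum_union]
    · apply Finset.sum_congr _ (fun _ _ => rfl)
      ext g
      simp only [Finset.mem_filter, Finset.mem_univ, true_and, Finset.mem_union, mem_surjs,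
        Finset.mem_image, hs]
      constructor
      · intro h
        by_cases hb : ∃ a, g a = b
        · left
          intro c
          by_cases hc : c = b
          · rw [hc]; exact hb
          · exact h c hc
        · right
          push Not at hb
          choose g' hg' using fun a => Fin.exists_succAbove_eq (hb a)
          refine ⟨g', ?_, funext hg'⟩
          intro c
          obtain ⟨a, ha⟩ := h (b.succAbove c) (Fin.succAbove_ne b c)
          exact ⟨a, Fin.succAbove_right_injective (by rw [hg', ha])⟩
      · rintro (h | ⟨g', h, rfl⟩) c hc
        · exact h c
        · obtain ⟨d, rfl⟩ := Fin.exists_succAbove_eq hc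
          obtain ⟨a, rfl⟩ := h d
          exact ⟨a, rfl⟩
    · rw [Finset.disjoint_left]
      intro g hg hg2
      rw [mem_surjs] at hg
      rw [Finset.mem_image] at hg2
      obtain ⟨g', _, rfl⟩ := hg2
      obtain ⟨a, ha⟩ := hg b
      exact Fin.succAbove_ne b _ ha
  rw [e1, Finset.sum_congr rfl (fun b _ => e2 b), Finset.sum_add_distrib]
  congr 1
  exact Finset.sum_comm

/-- weighted factorizations of `p` through `Fin k`. -/
noncomputable def facSum {n i : ℕ} (k : ℕ) (w : (Fin n → Fin k) → (Fin k → Fin i) → ℝ)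
    (p : Fin n → Fin i) : ℝ :=
  ∑ g ∈ surjs n k, ∑ h : Fin k → Fin i, if h ∘ g = p then w g h else 0

lemma snoc_comp_eq {n i k : ℕ} (g : Fin n → Fin k) (b : Fin k) (h : Fin k → Fin i)
    (p : Fin n → Fin i) (j : Fin i) :
    h ∘ (Fin.snoc g b : Fin (n+1) → Fin k) = Fin.snoc p j ↔ h ∘ g = p ∧ h b = j := by
  constructor
  · intro e
    refine ⟨funext fun a => ?_, ?_⟩
    · simpa using congrFun e a.castSucc
    · simpa using congrFun e (Fin.last n)
  · rintro ⟨rfl, rfl⟩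
    funext a
    induction a using Fin.lastCases with
    | last => simp
    | cast a => simp

lemma facSum_succ {n i k : ℕ} (w : (Fin (n+1) → Fin (k+1)) → (Fin (k+1) → Fin i) → ℝ)
    (p : Fin n → Fin i) (j : Fin i) :
    facSum (k+1) w (Fin.snoc p j : Fin (n+1) → Fin i)
      = facSum (k+1) (fun g h => ∑ b, if h b = j then w (Fin.snoc g b) h else 0) p
        + ∑ b : Fin (k+1), facSum k (fun g h =>
            w (Fin.snoc (b.succAbove ∘ g) b) (b.insertNth j h)) p := by
  unfold facSum
  rw [sum_surjs_succ]
  congr 1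
  · apply Finset.sum_congr rfl
    intro g _
    rw [Finset.sum_comm]
    apply Finset.sum_congr rfl
    intro h _
    simp only [snoc_comp_eq]
    split_ifs with e
    · simp [e]
    · simp [e]
  · apply Finset.sum_congr rfl
    intro b _
    apply Finset.sum_congr rfl
    intro g _
    rw [← (Fin.insertNthEquiv (fun _ => Fin i) b).sum_comp, Fintype.sum_prod_type,
      Finset.sum_eq_single j]
    · apply Finset.sum_congr rfl
      intro h _
      have : (b.insertNth j h : Fin (k+1) → Fin i) ∘ (b.succAbove ∘ g) = h ∘ g := by
        funext a; simp
      simp [Fin.insertNthEquiv, snoc_comp_eq, this]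
    · intro j' _ hj
      apply Finset.sum_eq_zero
      intro h _
      rw [if_neg]
      rw [snoc_comp_eq]
      rintro ⟨_, e⟩
      exact hj (by simpa [Fin.insertNthEquiv] using e)
    · simp

lemma facSum_congr {n i k : ℕ} {w w' : (Fin n → Fin k) → (Fin k → Fin i) → ℝ}
    {p : Fin n → Fin i}
    (H : ∀ g h, Function.Surjective g → h ∘ g = p → w g h = w' g h) :
    facSum k w p = facSum k w' p := by
  unfold facSum
  apply Finset.sum_congr rfl
  intro g hg
  apply Finset.sum_congr rfl
  intro h _
  split_ifs with e
  · exact H g h (mem_surjs.1 hg) e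
  · rfl

lemma facSum_mul {n i k : ℕ} {w : (Fin n → Fin k) → (Fin k → Fin i) → ℝ}
    {p : Fin n → Fin i} (c : ℝ) :
    facSum k (fun g h => c * w g h) p = c * facSum k w p := by
  unfold facSum
  simp only [Finset.mul_sum, mul_ite, mul_zero]

lemma facSum_lt {n i k : ℕ} {w : (Fin n → Fin k) → (Fin k → Fin i) → ℝ}
    {p : Fin n → Fin i} (hk : n < k) : facSum k w p = 0 := by
  unfold facSum
  rw [surjs_empty_of_lt hk, Finset.sum_empty]

lemma facSum_zero {n i : ℕ} {w : (Fin n → Fin 0) → (Fin 0 → Fin i) → ℝ}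
    {p : Fin n → Fin i} (hn : 1 ≤ n) : facSum 0 w p = 0 := by
  unfold facSum
  rw [surjs_zero_empty hn, Finset.sum_empty]

/-- alternating sum -/
noncomputable def altSum (n : ℕ) (u : ℕ → ℝ) : ℝ :=
  ∑ k ∈ Finset.range (n+1), (-1 : ℝ)^k * (u k / k.factorial)

lemma altSum_succ {n : ℕ} (u v w : ℕ → ℝ) (h0 : u 0 = 0)
    (h : ∀ k, u (k+1) = v (k+1) + (k+1) * w k) (hv : v (n+1) = 0) (hv0 : v 0 = 0) :
    altSum (n+1) u = altSum n v - altSum n w := by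
  have e : altSum n v = ∑ k ∈ Finset.range (n+1),
      (-1 : ℝ)^(k+1) * (v (k+1) / (k+1).factorial) := by
    unfold altSum
    rw [Finset.sum_range_succ', Finset.sum_range_succ (n := n), hv, hv0]
    simp
  rw [e]
  unfold altSum
  rw [Finset.sum_range_succ', h0, ← Finset.sum_sub_distrib]
  simp only [zero_div, mul_zero, add_zero]
  apply Finset.sum_congr rfl
  intro k _
  rw [h k, Nat.factorial_succ]
  have : (k.factorial : ℝ) ≠ 0 := by positivity
  push_cast
  field_simp
  ring

lemma snoc_injective_iff {n i : ℕ} (p : Fin n → Fin i) (j : Fin i) :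
    Function.Injective (Fin.snoc p j : Fin (n+1) → Fin i) ↔
      Function.Injective p ∧ ¬ ∃ a, p a = j := by
  rw [Fin.snoc_injective_iff]
  simp

lemma T1 {i : ℕ} : ∀ {n : ℕ} (p : Fin n → Fin i),
    altSum n (fun k => facSum k (fun _ h => wt h) p)
      = (-1 : ℝ)^n * (open Classical in if Function.Injective p then 1 else 0) := by
  intro n
  induction n with
  | zero =>
    intro p
    have : Function.Injective p := fun a => a.elim0
    simp [altSum, facSum, this, wt, fiberCard, surjs, Function.Surjective,
      Subsingleton.elim _ p]
  | succ n ih =>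
    intro p
    induction p using Fin.snocCases with
    | _ p j =>
    by_cases hj : ∃ a, p a = j
    · have hm : ∀ k (g : Fin n → Fin k) (h : Fin k → Fin i), h ∘ g = p → fiberCard h j ≠ 0 := by
        rintro k g h rfl
        obtain ⟨a, ha⟩ := hj
        exact ((fiberCard_pos h j).2 ⟨g a, ha⟩).ne'
      have hn : 1 ≤ n := by
        obtain ⟨a, _⟩ := hj
        have := a.2
        omega
      rw [altSum_succ _ (fun k => facSum k (fun _ h => (fiberCard h j : ℝ) * wt h) p)
        (fun k => facSum k (fun _ h => (fiberCard h j : ℝ) * wt h) p)]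
      · simp [snoc_injective_iff, hj]
      · exact facSum_zero (by omega)
      · intro k
        rw [facSum_succ]
        congr 1
        · apply facSum_congr
          intro g h _ _
          rw [← Finset.sum_filter, Finset.sum_const, nsmul_eq_mul]
          rfl
        · rw [Finset.sum_congr rfl (g := fun _ => facSum k (fun _ h => (fiberCard h j : ℝ) * wt h) p)]
          · simp
          · intro b _
            apply facSum_congr
            intro g h _ e
            rw [wt_insertNth, if_neg (hm k g h e)]
      · exact facSum_lt (by omega)
      · exact facSum_zero hn
    · have hm : ∀ k (g : Fin n → Fin k) (h : Fin k → Fin i), Function.Surjective g →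
          h ∘ g = p → fiberCard h j = 0 := by
        rintro k g h hg rfl
        by_contra hne
        obtain ⟨b, hb⟩ := (fiberCard_pos h j).1 (Nat.pos_of_ne_zero hne)
        obtain ⟨a, rfl⟩ := hg b
        exact hj ⟨a, hb⟩
      rw [altSum_succ _ (fun k => 0) (fun k => facSum k (fun _ h => wt h) p)]
      · rw [ih p]
        by_cases hp : Function.Injective p <;> simp [snoc_injective_iff, hj, altSum, pow_succ, hp]
      · exact facSum_zero (by omega)
      · intro k
        rw [facSum_succ]
        congr 1
        · rw [facSum_congr (w' := fun g h => 0 * 0)]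
          · rw [facSum_mul]; simp
          intro g h hg e
          rw [← Finset.sum_filter, Finset.sum_const, nsmul_eq_mul]
          have := hm _ g h hg e
          unfold fiberCard at this
          rw [this]; simp
        · rw [Finset.sum_congr rfl (g := fun _ => facSum k (fun _ h => wt h) p)]
          · simp
          · intro b _
            apply facSum_congr
            intro g h hg e
            rw [wt_insertNth, if_pos (hm k g h hg e), one_mul]
      · rfl
      · rfl

lemma T2 {i : ℕ} : ∀ {n : ℕ} (p : Fin n → Fin i),
    altSum n (fun k => facSum k (fun g _ => wt g) p)
      = (-1 : ℝ)^n * (open Classical in if Function.Injective p then 1 else 0) := by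
  intro n
  induction n with
  | zero =>
    intro p
    have : Function.Injective p := fun a => a.elim0
    simp [altSum, facSum, this, wt, surjs, Function.Surjective,
      Subsingleton.elim _ p]
  | succ n ih =>
    intro p
    induction p using Fin.snocCases with
    | _ p j =>
    have key : altSum (n+1) (fun k => facSum k (fun g _ => wt g) (Fin.snoc p j : Fin (n+1) → Fin i))
        = altSum n (fun k => (fiberCard p j : ℝ) * facSum k (fun g _ => wt g) p)
          - altSum n (fun k => facSum k (fun g _ => wt g) p) := by
      apply altSum_succ
      · exact facSum_zero (by omega)
      · intro k
        rw [facSum_succ]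
        congr 1
        · rw [← facSum_mul]
          apply facSum_congr
          intro g h hg e
          simp only [wt_snoc g hg]
          have : (fiberCard p j : ℝ) = ∑ b, if h b = j then (fiberCard g b : ℝ) else 0 := by
            subst e
            simp only [fiberCard_eq_sum]
            push_cast
            simp only [← Finset.sum_filter]
            rw [Finset.sum_comm' (t' := Finset.univ)
              (s' := fun a => Finset.univ.filter (fun b => h b = j ∧ g a = b))]
            · rw [Finset.sum_filter]
              apply Finset.sum_congr rfl
              intro a _
              by_cases ha : h (g a) = j
              · have : Finset.univ.filter (fun b => h b = j ∧ g a = b) = {g a} := by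
                  ext b; simp; constructor
                  · rintro ⟨_, rfl⟩; rfl
                  · rintro rfl; exact ⟨ha, rfl⟩
                rw [this]; simp [ha]
              · have : Finset.univ.filter (fun b => h b = j ∧ g a = b) = ∅ := by
                  ext b; simp
                  rintro h1 rfl; exact ha h1
                rw [this]; simp [ha]
            · simp
          rw [this, Finset.sum_mul]
          apply Finset.sum_congr rfl
          intro b _
          split_ifs <;> simp
        · rw [Finset.sum_congr rfl (g := fun _ => facSum k (fun g _ => wt g) p)]
          · simp
          · intro b _
            apply facSum_congr
            intro g h _ e
            rw [wt_succAbove]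
      · rw [facSum_lt (by omega), mul_zero]
      · rcases Nat.eq_zero_or_pos n with rfl | hn
        · simp [fiberCard]
        · rw [facSum_zero hn, mul_zero]
    have e2 : altSum n (fun k => (fiberCard p j : ℝ) * facSum k (fun g _ => wt g) p)
        = fiberCard p j * altSum n (fun k => facSum k (fun g _ => wt g) p) := by
      unfold altSum
      rw [Finset.mul_sum]
      apply Finset.sum_congr rfl
      intro k _
      ring
    rw [key, e2, ih p]
    simp only [snoc_injective_iff]
    by_cases hp : Function.Injective p
    · by_cases hj : ∃ a, p a = j
      · have : fiberCard p j = 1 := by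
          obtain ⟨a, rfl⟩ := hj
          unfold fiberCard
          rw [Finset.card_eq_one]
          exact ⟨a, by ext b; simp [hp.eq_iff]⟩
        simp [hp, hj, this]
      · have : fiberCard p j = 0 := by
          by_contra hne
          exact hj ((fiberCard_pos p j).1 (Nat.pos_of_ne_zero hne))
        simp [hp, hj, this, pow_succ]
    · simp [hp]

section Final
variable {X : Type*} [Fintype X] [DecidableEq X]

lemma comp_sum {n k i : ℕ} (w : (Fin n → Fin k) → (Fin k → Fin i) → ℝ)
    (F : (Fin n → Fin i) → ℝ) :
    ∑ h ∈ surjs k i, ∑ g ∈ surjs n k, w g h * F (h ∘ g)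
      = ∑ p ∈ surjs n i, F p * facSum k w p := by
  unfold facSum
  simp only [Finset.mul_sum]
  rw [Finset.sum_comm (s := surjs n i), Finset.sum_comm]
  apply Finset.sum_congr rfl
  intro g hg
  rw [Finset.sum_comm, surjs, Finset.sum_filter]
  apply Finset.sum_congr rfl
  intro h _
  have hs : Function.Surjective h ↔ h ∘ g ∈ surjs n i := by
    rw [mem_surjs]
    exact ⟨fun H => H.comp (mem_surjs.1 hg), fun H => H.of_comp⟩
  simp only [mul_ite, mul_zero]
  rw [Finset.sum_ite_eq]
  simp only [hs, mul_comm]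

lemma finish {i n : ℕ} (hn : 1 ≤ n) (f : (Fin n → X) → ℝ) (hf : IsSymmFun f)
    (y : Fin i → X) (u : ℕ → (Fin n → Fin i) → ℝ) (h0 : ∀ p, u 0 p = 0)
    (hu : ∀ p, altSum n (fun k => u k p)
      = (-1 : ℝ)^n * (open Classical in if Function.Injective p then 1 else 0)) :
    ∑ k ∈ Finset.Icc 1 n, (-1 : ℝ)^(n+k) *
        ((∑ p ∈ surjs n i, f (y ∘ p) * u k p) / k.factorial / i.factorial)
      = if h : n = i then castFun h f y else 0 := by
  have e : ∑ k ∈ Finset.Icc 1 n, (-1 : ℝ)^(n+k) *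
        ((∑ p ∈ surjs n i, f (y ∘ p) * u k p) / k.factorial / i.factorial)
      = ∑ p ∈ surjs n i, f (y ∘ p) / i.factorial *
          (open Classical in if Function.Injective p then 1 else 0) := by
    have : ∀ p, (open Classical in if Function.Injective p then 1 else 0)
        = ∑ k ∈ Finset.Icc 1 n, (-1 : ℝ)^(n+k) * (u k p / k.factorial) := by
      intro p
      have h1 : (-1 : ℝ)^n * altSum n (fun k => u k p)
        = (open Classical in if Function.Injective p then 1 else 0) := by
        rw [hu p, ← mul_assoc, ← pow_add, Even.neg_one_pow ⟨n, rfl⟩, one_mul]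
      rw [← h1, altSum, Finset.range_eq_Ico, Finset.sum_eq_sum_Ico_succ_bot (by omega), h0]
      simp only [zero_div, mul_zero, zero_add, Finset.mul_sum]
      apply Finset.sum_congr
      · ext k; simp [Nat.lt_succ_iff, Nat.succ_le_iff] <;> omega
      · intro k _
        rw [pow_add, mul_assoc]
    simp only [this, Finset.mul_sum, Finset.sum_div]
    rw [Finset.sum_comm]
    apply Finset.sum_congr rfl
    intro p _
    apply Finset.sum_congr rfl
    intro k _
    ring
  rw [e]
  split_ifs with h
  · subst h
    rw [Finset.sum_congr rfl (g := fun _ => f y / n.factorial)]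
    · have hc : (surjs n n).card = n.factorial := by
        have := Fintype.card_perm (α := Fin n)
        rw [Fintype.card_fin] at this
        rw [← this, ← Finset.card_univ]
        symm
        apply Finset.card_bij (fun (π : Equiv.Perm (Fin n)) _ => (π : Fin n → Fin n))
        · intro π _; exact mem_surjs.2 π.surjective
        · intro a _ b _ h; exact Equiv.coe_fn_injective h
        · intro g hg
          exact ⟨Equiv.ofBijective g (Finite.surjective_iff_bijective.1 (mem_surjs.1 hg)),
            Finset.mem_univ _, rfl⟩
      rw [Finset.sum_const, hc, nsmul_eq_mul]
      have : (n.factorial : ℝ) ≠ 0 := by positivity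
      field_simp
      rfl
    · intro p hp
      have hb := Finite.surjective_iff_bijective.1 (mem_surjs.1 hp)
      rw [if_pos hb.1, mul_one]
      congr 1
      exact hf (Equiv.ofBijective p hb) y
  · apply Finset.sum_eq_zero
    intro p hp
    rw [if_neg, mul_zero]
    intro hinj
    apply h
    have := Fintype.card_of_bijective ⟨hinj, mem_surjs.1 hp⟩
    simpa using this

end Final

/-- Biorthogonality of the Stirling operators: for `i, n ≥ 1`,
`Σ_{k=1}^{n} s(k,i) ∘ S(n,k) = δ_{ni}·Id` and `Σ_{k=1}^{n} S(k,i) ∘ s(n,k) = δ_{ni}·Id`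
as operators from symmetric functions on `X^n` to symmetric functions on `X^i`. -/
theorem stirling_biorthogonality
    {X : Type*} [Fintype X] [DecidableEq X] {i n : ℕ} (hi : 1 ≤ i) (hn : 1 ≤ n)
    (f : (Fin n → X) → ℝ) (hf : IsSymmFun f) :
    (∀ y : Fin i → X,
        (∑ k ∈ Finset.Icc 1 n, sop k i (Sop n k f) y)
          = if h : n = i then castFun h f y else 0)
    ∧ (∀ y : Fin i → X,
        (∑ k ∈ Finset.Icc 1 n, Sop k i (sop n k f) y)
          = if h : n = i then castFun h f y else 0) := by
  refine ⟨fun y => ?_, fun y => ?_⟩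
  · have hR : (if h : n = i then castFun h f y else 0)
        = (-1 : ℝ)^(n+i) * (if h : n = i then castFun h f y else 0) := by
      split_ifs with h
      · subst h
        rw [Even.neg_one_pow ⟨n, rfl⟩, one_mul]
      · simp
    rw [hR, ← finish hn f hf y (fun k p => facSum k (fun _ h => wt h) p)
      (fun p => facSum_zero hn) T1, Finset.mul_sum]
    apply Finset.sum_congr rfl
    intro k hk
    rw [← comp_sum]
    by_cases hki : k < i
    · simp [sop, cop, surjs_empty_of_lt hki]
    have hs : (-1 : ℝ)^(k-i) = (-1)^(n+i) * (-1)^(n+k) := by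
      rw [← pow_add, show n + i + (n + k) = (k - i) + ((n + i) + (n + i)) by omega, pow_add,
        Even.neg_one_pow ⟨n + i, rfl⟩, mul_one]
    rw [← mul_assoc, ← hs]
    simp only [Sop, sop, cop, wt]
    simp only [Finset.sum_div, Finset.mul_sum, Function.comp_assoc]
    refine Finset.sum_congr rfl fun h _ => Finset.sum_congr rfl fun g _ => ?_
    ring
  · rw [← finish hn f hf y (fun k p => facSum k (fun g _ => wt g) p)
      (fun p => facSum_zero hn) T2]
    apply Finset.sum_congr rfl
    intro k hk
    rw [Finset.mem_Icc] at hk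
    have hs : (-1 : ℝ)^(n-k) = (-1)^(n+k) := by
      rw [show n + k = (n - k) + (k + k) by omega, pow_add, Even.neg_one_pow ⟨k, rfl⟩, mul_one]
    rw [← comp_sum]
    simp only [Sop, sop, cop, hs, wt]
    simp only [Finset.sum_div, Finset.mul_sum, Function.comp_assoc]
    refine Finset.sum_congr rfl fun h _ => Finset.sum_congr rfl fun g _ => ?_
    ring
end
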